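/- Let H and K be complex Hilbert spaces, V : K → H a bounded linear operator with ‖V‖ ≤ 1, and A a positive bounded operator on H. Then for every α ∈ [0,1], V* A^α V ≤ (V* A V)^α, where the powers are defined by the continuous functional calculus for positive operators. -/

import Mathlib

/-!
For `0 < α < 1` the power function has the representation `x ^ α = ∫ t ^ (α - 1) · x / (t + x) dμ(t)`
over `t > 0`, which passes to the functional calculus, so it suffices to treat the function
`x ↦ x / (t + x)` for each `t > 0`. Writing `F = A / (t + A)`, its quadratic form is variational:
`t ⟨u, F u⟩ = min_v (⟨u - v, A (u - v)⟩ + t ‖v‖ ^ 2)`, the minimum being attained at `v = F u`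
(`variational_identity`). With `G = B / (t + B)`, `B = V* A V`, the choice `v = V (G ξ)` for
`u = V ξ` gives
`t ⟨V ξ, F V ξ⟩ ≤ ⟨ξ - G ξ, B (ξ - G ξ)⟩ + t ‖V (G ξ)‖ ^ 2 ≤ t ⟨ξ, G ξ⟩`,
the last step because `‖V‖ ≤ 1` and `G ξ` is the minimiser for `B`.
The endpoints `α = 0` (where `x ^ 0 = 1` for all `x`, so the claim is `V* V ≤ 1`) and `α = 1`
are immediate.
-/

open MeasureTheory Set Real

section Helpers

variable {E : Type*} [NormedAddCommGroup E] [InnerProductSpace ℂ E]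

/-- Completing the square for the functional `v ↦ ⟨u - v, A (u - v)⟩ + t ‖v‖ ^ 2`. Here `f` plays
the role of `(A + t)⁻¹ A u`; since `A` is positive and `t > 0`, the right-hand side shows that
`t ⟨u, f⟩` is the minimum of the functional and that `v = f` attains it. -/
lemma variational_identity (A : E →L[ℂ] E) (hA : A.IsPositive) (t : ℝ) (u v f : E)
    (hf : A f + (t : ℂ) • f = A u) :
    (inner ℂ (u - v) (A (u - v))).re + t * ‖v‖ ^ 2 =
      t * (inner ℂ u f).re + ((inner ℂ (v - f) (A (v - f))).re + t * ‖v - f‖ ^ 2) := by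
  obtain ⟨w, rfl⟩ : ∃ w, v = f + w := ⟨v - f, by abel⟩
  obtain ⟨y, rfl⟩ : ∃ y, u = f + y := ⟨u - f, by abel⟩
  have hy : A y = (t : ℂ) • f := by
    rw [map_add] at hf
    exact (add_left_cancel hf).symm
  have e1 : f + y - (f + w) = y - w := by abel
  have e2 : f + w - f = w := by abel
  rw [e1, e2]
  have h1 : (inner ℂ y (A w)).re = t * (inner ℂ f w).re := by
    rw [← hA.inner_left_eq_inner_right, hy, inner_smul_left]
    simp
  have h2 : (inner ℂ w f).re = (inner ℂ f w).re := inner_re_symm (𝕜 := ℂ) w f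
  have h3 : ‖f + w‖ ^ 2 = ‖f‖ ^ 2 + 2 * (inner ℂ f w).re + ‖w‖ ^ 2 :=
    norm_add_sq (𝕜 := ℂ) f w
  have h4 : (inner ℂ f f).re = ‖f‖ ^ 2 := inner_self_eq_norm_sq (𝕜 := ℂ) f
  rw [h3]
  simp only [map_sub, inner_sub_left, inner_sub_right, inner_add_left, hy, inner_smul_right,
    Complex.sub_re, Complex.add_re, Complex.re_ofReal_mul, h1, h2, h4]
  ring

variable [CompleteSpace E]

lemma spectrum_subset_Ici {a : E →L[ℂ] E} (ha : a.IsPositive) : spectrum ℝ a ⊆ Ici 0 := by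
  intro x hx
  exact spectrum_nonneg_of_nonneg ((ContinuousLinearMap.nonneg_iff_isPositive a).2 ha) hx

/-- The resolvent equation characterising `F = c · a / (t + a)`, `c = t ^ (p - 1)`. -/
lemma cfc_rpowIntegrand_resolvent {p t : ℝ} (hp : p ∈ Ioo 0 1) (ht : 0 < t)
    {a : E →L[ℂ] E} (ha : a.IsPositive) (u : E) :
    a (cfc (rpowIntegrand₀₁ p t) a u) + (t : ℂ) • cfc (rpowIntegrand₀₁ p t) a u =
      a (((t ^ (p - 1) : ℝ) : ℂ) • u) := by
  have hs := spectrum_subset_Ici ha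
  have hsa : IsSelfAdjoint a := ha.isSelfAdjoint
  have hc : ContinuousOn (rpowIntegrand₀₁ p t) (spectrum ℝ a) :=
    (continuousOn_rpowIntegrand₀₁_Ici hp ht).mono hs
  have key : a * cfc (rpowIntegrand₀₁ p t) a + t • cfc (rpowIntegrand₀₁ p t) a
      = (t ^ (p - 1)) • a := by
    have h1 : a * cfc (rpowIntegrand₀₁ p t) a
        = cfc (fun x : ℝ => x * rpowIntegrand₀₁ p t x) a := by
      rw [cfc_mul (fun x : ℝ => x) (rpowIntegrand₀₁ p t) a, cfc_id' ℝ a]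
    have h2 : t • cfc (rpowIntegrand₀₁ p t) a
        = cfc (fun x : ℝ => t • rpowIntegrand₀₁ p t x) a := (cfc_smul t _ a hc).symm
    have h3 : (t ^ (p - 1)) • a = cfc (fun x : ℝ => t ^ (p - 1) • x) a := by
      rw [cfc_smul _ (fun x : ℝ => x) a, cfc_id' ℝ a]
    rw [h1, h2, h3, ← cfc_add a (fun x : ℝ => x * rpowIntegrand₀₁ p t x)
      (fun x : ℝ => t • rpowIntegrand₀₁ p t x) (by fun_prop) (by fun_prop)]
    refine cfc_congr fun x hx => ?_
    have hx0 : 0 ≤ x := hs hx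
    have : t + x ≠ 0 := by positivity
    simp only [smul_eq_mul, rpowIntegrand₀₁_eq_pow_div hp ht.le hx0]
    field_simp
    ring
  have := congrArg (fun T : E →L[ℂ] E => T u) key
  simpa [map_smul] using this

/-- The integral representation of `a ^ p` for an arbitrary measure representing the scalar
function. Keeping the measure as a parameter lets one measure serve operators on two different
spaces. -/
lemma cfc_rpow_eq_integral {p : ℝ} (hp : p ∈ Ioo 0 1) {μ : Measure ℝ}
    (hμ : ∀ x ∈ Ici (0 : ℝ), IntegrableOn (fun t => rpowIntegrand₀₁ p t x) (Ioi 0) μ ∧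
      x ^ p = ∫ t in Ioi 0, rpowIntegrand₀₁ p t x ∂μ)
    {a : E →L[ℂ] E} (ha : a.IsPositive) :
    IntegrableOn (fun t => cfc (rpowIntegrand₀₁ p t) a) (Ioi 0) μ ∧
      cfc (fun x : ℝ => x ^ p) a = ∫ t in Ioi 0, cfc (rpowIntegrand₀₁ p t) a ∂μ := by
  have hs := spectrum_subset_Ici ha
  have hsa : IsSelfAdjoint a := ha.isSelfAdjoint
  -- The integrand is monotone in `x`, so it is dominated by its value at any upper bound of the
  -- spectrum.
  obtain ⟨M, hM⟩ := (spectrum.isCompact (𝕜 := ℝ) a).bddAbove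
  have hM0 : 0 ≤ max M 0 := le_max_right _ _
  have hf : ContinuousOn (Function.uncurry (rpowIntegrand₀₁ p)) (Ioi (0 : ℝ) ×ˢ spectrum ℝ a) :=
    continuousOn_rpowIntegrand₀₁_uncurry hp (spectrum ℝ a) hs
  have hbound : ∀ᵐ t ∂μ.restrict (Ioi 0), ∀ z ∈ spectrum ℝ a,
      ‖rpowIntegrand₀₁ p t z‖ ≤ ‖rpowIntegrand₀₁ p t (max M 0)‖ := by
    filter_upwards [ae_restrict_mem measurableSet_Ioi] with t ht z hz
    have hz' : 0 ≤ z := hs hz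
    rw [Real.norm_of_nonneg (rpowIntegrand₀₁_nonneg hp.1 (le_of_lt ht) hz'),
        Real.norm_of_nonneg (rpowIntegrand₀₁_nonneg hp.1 (le_of_lt ht) hM0)]
    exact rpowIntegrand₀₁_monotoneOn hp (le_of_lt ht) hz' hM0 ((hM hz).trans (le_max_left _ _))
  have hfin : HasFiniteIntegral (fun t => ‖rpowIntegrand₀₁ p t (max M 0)‖)
      (μ.restrict (Ioi 0)) := by
    rw [hasFiniteIntegral_norm_iff]
    exact (hμ _ hM0).1.2
  refine ⟨integrableOn_cfc measurableSet_Ioi _ _ a hf hbound hfin, ?_⟩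
  rw [← cfc_setIntegral measurableSet_Ioi _ _ a hf hbound hfin]
  exact cfc_congr fun x hx => (hμ x (hs hx)).2

/-- The quadratic form `T ↦ re ⟨ξ, T ξ⟩` is real-linear and bounded, hence commutes with
integration. -/
lemma re_inner_integral {μ : Measure ℝ} {s : Set ℝ} {T : ℝ → E →L[ℂ] E}
    (hT : IntegrableOn T s μ) (ξ : E) :
    IntegrableOn (fun t => (inner ℂ ξ (T t ξ)).re) s μ ∧
      (inner ℂ ξ ((∫ t in s, T t ∂μ) ξ)).re = ∫ t in s, (inner ℂ ξ (T t ξ)).re ∂μ := by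
  have h1 : IntegrableOn (fun t => T t ξ) s μ := hT.apply_continuousLinearMap ξ
  have h2 : IntegrableOn (fun t => inner ℂ ξ (T t ξ)) s μ := Integrable.const_inner ξ h1
  refine ⟨h2.re, ?_⟩
  rw [ContinuousLinearMap.integral_apply hT, ← integral_inner h1]
  exact (integral_re h2).symm

end Helpers

section Contraction

variable {H K : Type*} [NormedAddCommGroup H] [InnerProductSpace ℂ H]
  [NormedAddCommGroup K] [InnerProductSpace ℂ K]

lemma norm_apply_sq_le (V : K →L[ℂ] H) (hV : ‖V‖ ≤ 1) (ξ : K) : ‖V ξ‖ ^ 2 ≤ ‖ξ‖ ^ 2 := by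
  have := V.le_of_opNorm_le hV ξ
  rw [one_mul] at this
  gcongr

variable [CompleteSpace H] [CompleteSpace K]

/-- The Jensen inequality for the functions `x ↦ t ^ (p - 1) * x / (t + x)`. -/
lemma jensen_rpowIntegrand {p t : ℝ} (hp : p ∈ Ioo 0 1) (ht : 0 < t)
    (V : K →L[ℂ] H) (hV : ‖V‖ ≤ 1) {A : H →L[ℂ] H} (hA : A.IsPositive) (ξ : K) :
    (inner ℂ (V ξ) (cfc (rpowIntegrand₀₁ p t) A (V ξ))).re ≤
      (inner ℂ ξ (cfc (rpowIntegrand₀₁ p t)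
        (ContinuousLinearMap.adjoint V ∘L A ∘L V) ξ)).re := by
  set B := ContinuousLinearMap.adjoint V ∘L A ∘L V with hBdef
  have hB : B.IsPositive := hA.adjoint_conj V
  set c : ℝ := t ^ (p - 1) with hc
  have hc0 : 0 < c := by positivity
  set f := cfc (rpowIntegrand₀₁ p t) A (V ξ) with hf
  set g := cfc (rpowIntegrand₀₁ p t) B ξ with hg
  -- Both identities are applied at `u = c ξ`, which absorbs the factor `c = t ^ (p - 1)`.
  have hA' := variational_identity A hA t ((c : ℂ) • V ξ) (V g) f
    (cfc_rpowIntegrand_resolvent hp ht hA (V ξ))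
  have hB' := variational_identity B hB t ((c : ℂ) • ξ) g g
    (cfc_rpowIntegrand_resolvent hp ht hB ξ)
  have hVB : inner ℂ ((c : ℂ) • V ξ - V g) (A ((c : ℂ) • V ξ - V g)) =
      inner ℂ ((c : ℂ) • ξ - g) (B ((c : ℂ) • ξ - g)) := by
    rw [← map_smul, ← map_sub]
    simp only [hBdef, ContinuousLinearMap.comp_apply, ContinuousLinearMap.adjoint_inner_right]
  have hpos : 0 ≤ (inner ℂ (V g - f) (A (V g - f))).re := hA.re_inner_nonneg_right _
  have hnorm := mul_le_mul_of_nonneg_left (norm_apply_sq_le V hV g) ht.le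
  have hsq : 0 ≤ t * ‖V g - f‖ ^ 2 := by positivity
  rw [hVB] at hA'
  simp only [inner_smul_left, Complex.conj_ofReal, Complex.re_ofReal_mul, sub_self, map_zero,
    inner_zero_left, Complex.zero_re, norm_zero] at hA' hB'
  have h : t * (c * (inner ℂ (V ξ) f).re) ≤ t * (c * (inner ℂ ξ g).re) := by
    nlinarith
  exact le_of_mul_le_mul_left (le_of_mul_le_mul_left h ht) hc0

end Contraction

/-- **Hansen's Jensen operator inequality.** If `V : K → H` is a contraction and `A` is a
positive bounded operator on `H`, then `V* A^α V ≤ (V* A V)^α` for every `α ∈ [0,1]`,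
powers being given by the continuous functional calculus.  `S ≤ T` is expressed as
`(T - S).IsPositive`. -/
theorem jensen_operator_inequality
    {H K : Type*} [NormedAddCommGroup H] [InnerProductSpace ℂ H] [CompleteSpace H]
    [NormedAddCommGroup K] [InnerProductSpace ℂ K] [CompleteSpace K]
    (V : K →L[ℂ] H) (hV : ‖V‖ ≤ 1)
    (A : H →L[ℂ] H) (hA : A.IsPositive)
    (α : ℝ) (hα0 : 0 ≤ α) (hα1 : α ≤ 1) :
    (cfc (fun x : ℝ => x ^ α) (ContinuousLinearMap.adjoint V ∘L A ∘L V)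
      - ContinuousLinearMap.adjoint V ∘L cfc (fun x : ℝ => x ^ α) A ∘L V).IsPositive := by
  have hB : (ContinuousLinearMap.adjoint V ∘L A ∘L V).IsPositive := hA.adjoint_conj V
  have hAsa : IsSelfAdjoint A := hA.isSelfAdjoint
  have hBsa := hB.isSelfAdjoint
  rw [ContinuousLinearMap.isPositive_def']
  refine ⟨(cfc_predicate (R := ℝ) (p := IsSelfAdjoint) _ _).sub
    ((cfc_predicate (R := ℝ) (p := IsSelfAdjoint) _ A).adjoint_conj V),
    fun ξ => ?_⟩
  rw [ContinuousLinearMap.reApplyInnerSelf_apply, inner_re_symm]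
  simp only [_root_.sub_apply, inner_sub_right, ContinuousLinearMap.comp_apply,
    ContinuousLinearMap.adjoint_inner_right, map_sub, sub_nonneg]
  change (inner ℂ (V ξ) _).re ≤ (inner ℂ ξ _).re
  rcases hα0.eq_or_lt with rfl | h0
  · simp only [Real.rpow_zero]
    rw [cfc_const_one ℝ A, cfc_const_one ℝ (ContinuousLinearMap.adjoint V ∘L A ∘L V)]
    have h1 : (inner ℂ (V ξ) (V ξ)).re = ‖V ξ‖ ^ 2 := inner_self_eq_norm_sq (𝕜 := ℂ) _
    have h2 : (inner ℂ ξ ξ).re = ‖ξ‖ ^ 2 := inner_self_eq_norm_sq (𝕜 := ℂ) _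
    rw [one_apply_eq_self, one_apply_eq_self, h1, h2]
    exact norm_apply_sq_le V hV ξ
  rcases hα1.eq_or_lt with rfl | h1
  · simp only [Real.rpow_one]
    rw [cfc_id' ℝ A, cfc_id' ℝ (ContinuousLinearMap.adjoint V ∘L A ∘L V)]
    simp only [ContinuousLinearMap.comp_apply, ContinuousLinearMap.adjoint_inner_right, le_refl]
  have hp : α ∈ Ioo (0 : ℝ) 1 := ⟨h0, h1⟩
  obtain ⟨μ, hμ⟩ := exists_measure_rpow_eq_integral_rpowIntegrand₀₁ hp
  obtain ⟨iA, eA⟩ := cfc_rpow_eq_integral hp hμ hA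
  obtain ⟨iB, eB⟩ := cfc_rpow_eq_integral hp hμ hB
  obtain ⟨jA, fA⟩ := re_inner_integral iA (V ξ)
  obtain ⟨jB, fB⟩ := re_inner_integral iB ξ
  rw [eA, eB, fA, fB]
  exact setIntegral_mono_on jA jB measurableSet_Ioi
    fun t ht => jensen_rpowIntegrand hp ht V hV hA ξ
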